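/- Let T ≥ 2, τ ∈ {1,…,T}, and L ∈ {1,…,τ−1}. Suppose the file F, local randomness R with H(R) = ρ, and shares M_1,…,M_T (each M_t a deterministic function of (F,R)) satisfy recoverability with threshold τ, (0, τ−L)-privacy (i.e., I(F; M_S) = 0 whenever |S| ≤ τ−L), and leakage symmetry. Then for every t ∈ {1,…,T}, H(M_t) ≥ H(F)/L, and ρ ≥ ((τ−L)/L)·H(F). -/

import Mathlib

/-!
Write `h(S) = H(M_S)`, a submodular function of `S`. For `|A| ≤ τ - L` and `t ∉ A`, pick for each
`s` with `τ - L ≤ s < τ` a set `B ⊇ A` of size `s` avoiding `t`. Then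
`h(A ∪ t) - h(A) ≥ h(B ∪ t) - h(B) ≥ I(F; M_{B ∪ t}) - I(F; M_B)`, and by leakage symmetry the
right side depends on `s` only; summing over the `L` values of `s` it telescopes from `0` (privacy)
to `H(F)` (recoverability), so `h(A ∪ t) - h(A) ≥ H(F) / L` (`ent_insert_ge`).

With `A = ∅` this is the bound on a single share. Building up a set `S` of size `τ - L` one share
at a time gives `h(S) ≥ (τ - L) H(F) / L`, while privacy, determinism and independence give
`H(F) + h(S) = H(F, M_S) ≤ H(F, R) = H(F) + ρ`.

The Shannon inequalities needed (`ent_mono`, `ent_submod`) are derived from the expected-surprisal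
form of entropy, `ent_eq`.
-/

open scoped BigOperators
open Classical

noncomputable section

/-- Probability of an event `A` under the probability mass function `p` on a finite
sample space `Ω`. -/
def prb {Ω : Type} [Fintype Ω] (p : Ω → ℝ) (A : Set Ω) : ℝ :=
  ∑ ω, if ω ∈ A then p ω else 0

/-- Shannon entropy (in bits, base-2 logarithm) of a random variable `X` defined on a
finite sample space with probability mass function `p`, with the convention
`0 * log 0 = 0`. -/
def ent {Ω V : Type} [Fintype Ω] [Fintype V] (p : Ω → ℝ) (X : Ω → V) : ℝ :=
  -∑ v, prb p {ω | X ω = v} * Real.logb 2 (prb p {ω | X ω = v})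

/-- Conditional Shannon entropy `H(X | Y) = H(X, Y) - H(Y)`. -/
def condEnt {Ω V W : Type} [Fintype Ω] [Fintype V] [Fintype W]
    (p : Ω → ℝ) (X : Ω → V) (Y : Ω → W) : ℝ :=
  ent p (fun ω => (X ω, Y ω)) - ent p Y

/-- Mutual information `I(X ; Y) = H(X) + H(Y) - H(X, Y)`. -/
def mutInf {Ω V W : Type} [Fintype Ω] [Fintype V] [Fintype W]
    (p : Ω → ℝ) (X : Ω → V) (Y : Ω → W) : ℝ :=
  ent p X + ent p Y - ent p (fun ω => (X ω, Y ω))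

/-- The tuple of shares `M_S = (M_t)_{t ∈ S}` viewed as a single random variable. -/
def shares {Ω : Type} {T : ℕ} {χ : Fin T → Type} (M : ∀ t, Ω → χ t)
    (S : Finset (Fin T)) : Ω → (∀ t : S, χ t.1) :=
  fun ω t => M t.1 ω

/-- Expectation of a function of `X`, computed on the sample space or on the range. -/
lemma sum_comp_eq {Ω V : Type} [Fintype Ω] [Fintype V] (p : Ω → ℝ) (X : Ω → V) (φ : V → ℝ) :
    ∑ ω, p ω * φ (X ω) = ∑ v, prb p {ω | X ω = v} * φ v := by
  simp only [prb, Set.mem_ofPred_eq, Finset.sum_mul]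
  rw [Finset.sum_comm]
  refine Finset.sum_congr rfl fun ω _ => ?_
  simp [ite_mul]

/-- Entropy as the expected surprisal; this form depends on `X` only through its fibres. -/
lemma ent_eq {Ω V : Type} [Fintype Ω] [Fintype V] (p : Ω → ℝ) (X : Ω → V) :
    ent p X = -∑ ω, p ω * Real.logb 2 (prb p {ω' | X ω' = X ω}) := by
  rw [ent, ← sum_comp_eq p X (fun v => Real.logb 2 (prb p {ω | X ω = v}))]

lemma prb_nonneg {Ω : Type} [Fintype Ω] {p : Ω → ℝ} (hp0 : ∀ ω, 0 ≤ p ω) (A : Set Ω) :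
    0 ≤ prb p A :=
  Finset.sum_nonneg fun ω _ => by split_ifs <;> simp [hp0]

lemma prb_mono {Ω : Type} [Fintype Ω] {p : Ω → ℝ} (hp0 : ∀ ω, 0 ≤ p ω) {A B : Set Ω}
    (h : A ⊆ B) : prb p A ≤ prb p B := by
  refine Finset.sum_le_sum fun ω _ => ?_
  by_cases hA : ω ∈ A
  · simp [hA, h hA]
  · rw [if_neg hA]
    split_ifs <;> simp [hp0]

lemma prb_pos {Ω : Type} [Fintype Ω] {p : Ω → ℝ} (hp0 : ∀ ω, 0 ≤ p ω) {A : Set Ω} {ω : Ω}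
    (h : ω ∈ A) (hω : 0 < p ω) : 0 < prb p A := by
  refine Finset.sum_pos' (fun ω _ => by split_ifs <;> simp [hp0]) ⟨ω, Finset.mem_univ _, ?_⟩
  simpa [h] using hω

/-- Marginalization. -/
lemma sum_prb_and {Ω V : Type} [Fintype Ω] [Fintype V] (p : Ω → ℝ) (X : Ω → V) (A : Set Ω) :
    ∑ v, prb p {ω | X ω = v ∧ ω ∈ A} = prb p A := by
  simp only [prb, Set.mem_ofPred_eq]
  rw [Finset.sum_comm]
  refine Finset.sum_congr rfl fun ω _ => ?_
  by_cases h : ω ∈ A <;> simp [h]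

lemma sum_prb {Ω V : Type} [Fintype Ω] [Fintype V] {p : Ω → ℝ} (hp1 : ∑ ω, p ω = 1)
    (X : Ω → V) : ∑ v, prb p {ω | X ω = v} = 1 := by
  simpa [hp1] using (sum_comp_eq p X (fun _ => 1)).symm

/-- If `X` determines `Y` then `H(Y) ≤ H(X)`. -/
lemma ent_mono {Ω V W : Type} [Fintype Ω] [Fintype V] [Fintype W] {p : Ω → ℝ}
    (hp0 : ∀ ω, 0 ≤ p ω) (X : Ω → V) (Y : Ω → W)
    (h : ∀ ω ω', X ω = X ω' → Y ω = Y ω') : ent p Y ≤ ent p X := by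
  rw [ent_eq, ent_eq, neg_le_neg_iff]
  refine Finset.sum_le_sum fun ω _ => ?_
  rcases (hp0 ω).eq_or_lt with h0 | h0
  · simp [← h0]
  · refine mul_le_mul_of_nonneg_left ?_ h0.le
    exact Real.logb_le_logb_of_le one_lt_two
      (prb_pos hp0 (show ω ∈ {ω' | X ω' = X ω} from rfl) h0)
      (prb_mono hp0 fun ω' hω' => h _ _ hω')

lemma ent_congr {Ω V W : Type} [Fintype Ω] [Fintype V] [Fintype W] {p : Ω → ℝ}
    (hp0 : ∀ ω, 0 ≤ p ω) (X : Ω → V) (Y : Ω → W)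
    (h : ∀ ω ω', X ω = X ω' ↔ Y ω = Y ω') : ent p X = ent p Y :=
  le_antisymm (ent_mono hp0 _ _ fun _ _ => (h _ _).2) (ent_mono hp0 _ _ fun _ _ => (h _ _).1)

lemma ent_indep {Ω V W : Type} [Fintype Ω] [Fintype V] [Fintype W] {p : Ω → ℝ}
    (hp0 : ∀ ω, 0 ≤ p ω) (X : Ω → V) (Y : Ω → W)
    (h : ∀ x y, prb p {ω | X ω = x ∧ Y ω = y} = prb p {ω | X ω = x} * prb p {ω | Y ω = y}) :
    ent p (fun ω => (X ω, Y ω)) = ent p X + ent p Y := by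
  rw [ent_eq, ent_eq, ent_eq, ← neg_add, neg_inj, ← Finset.sum_add_distrib]
  refine Finset.sum_congr rfl fun ω _ => ?_
  rcases (hp0 ω).eq_or_lt with h0 | h0
  · simp [← h0]
  · have hX := prb_pos hp0 (show ω ∈ {ω' | X ω' = X ω} from rfl) h0
    have hY := prb_pos hp0 (show ω ∈ {ω' | Y ω' = Y ω} from rfl) h0
    simp only [Prod.mk.injEq]
    rw [h, Real.logb_mul hX.ne' hY.ne', mul_add]

/-- The function `P(x,z) P(y,z) / P(z)` has total mass at most `1`. -/
lemma sum_cond_product_le {Ω U V W : Type} [Fintype Ω] [Fintype U] [Fintype V] [Fintype W]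
    {p : Ω → ℝ} (hp1 : ∑ ω, p ω = 1) (X : Ω → U) (Y : Ω → V) (Z : Ω → W) :
    ∑ v : U × V × W, prb p {ω | X ω = v.1 ∧ Z ω = v.2.2} * prb p {ω | Y ω = v.2.1 ∧ Z ω = v.2.2} /
      prb p {ω | Z ω = v.2.2} ≤ 1 := by
  have hX : ∀ z, ∑ x, prb p {ω | X ω = x ∧ Z ω = z} = prb p {ω | Z ω = z} := fun z =>
    sum_prb_and p X {ω | Z ω = z}
  have hY : ∀ z, ∑ y, prb p {ω | Y ω = y ∧ Z ω = z} = prb p {ω | Z ω = z} := fun z =>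
    sum_prb_and p Y {ω | Z ω = z}
  refine le_of_eq ?_
  calc _ = ∑ z, ∑ x, ∑ y, prb p {ω | X ω = x ∧ Z ω = z} * prb p {ω | Y ω = y ∧ Z ω = z} /
        prb p {ω | Z ω = z} := by
        simp only [Fintype.sum_prod_type]
        symm
        rw [Finset.sum_comm]
        exact Finset.sum_congr rfl fun x _ => Finset.sum_comm
    _ = ∑ z, prb p {ω | Z ω = z} := by
        refine Finset.sum_congr rfl fun z _ => ?_
        simp_rw [← Finset.sum_div, ← Finset.mul_sum, hY, ← Finset.sum_mul, hX]
        exact mul_self_div_self _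
    _ = 1 := sum_prb hp1 Z

/-- Submodularity of entropy, `I(X ; Y | Z) ≥ 0`. Bounding `log a ≤ a - 1` at
`a = P(x,z) P(y,z) / (P(x,y,z) P(z))` reduces it to `sum_cond_product_le`. -/
lemma ent_submod {Ω U V W : Type} [Fintype Ω] [Fintype U] [Fintype V] [Fintype W] {p : Ω → ℝ}
    (hp0 : ∀ ω, 0 ≤ p ω) (hp1 : ∑ ω, p ω = 1) (X : Ω → U) (Y : Ω → V) (Z : Ω → W) :
    ent p (fun ω => (X ω, Y ω, Z ω)) + ent p Z ≤
      ent p (fun ω => (X ω, Z ω)) + ent p (fun ω => (Y ω, Z ω)) := by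
  set q : U × V × W → ℝ := fun v =>
    prb p {ω | X ω = v.1 ∧ Z ω = v.2.2} * prb p {ω | Y ω = v.2.1 ∧ Z ω = v.2.2} /
      prb p {ω | Z ω = v.2.2} with hq
  set P : U × V × W → ℝ := fun v => prb p {ω | (X ω, Y ω, Z ω) = v} with hP
  have hq0 : ∀ v, 0 ≤ q v := fun v =>
    div_nonneg (mul_nonneg (prb_nonneg hp0 _) (prb_nonneg hp0 _)) (prb_nonneg hp0 _)
  have hsum : ∑ ω, p ω * (q (X ω, Y ω, Z ω) / P (X ω, Y ω, Z ω)) ≤ 1 := by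
    rw [sum_comp_eq p (fun ω => (X ω, Y ω, Z ω)) (fun v => q v / P v)]
    refine le_trans (Finset.sum_le_sum fun v _ => ?_) (sum_cond_product_le hp1 X Y Z)
    change P v * (q v / P v) ≤ q v
    by_cases h : P v = 0
    · simpa [h] using hq0 v
    · rw [mul_div_cancel₀ _ h]
  have hlog2 : 0 < Real.log 2 := Real.log_pos one_lt_two
  have key : ∀ ω, p ω * (Real.logb 2 (prb p {ω' | (X ω', Z ω') = (X ω, Z ω)}) +
      Real.logb 2 (prb p {ω' | (Y ω', Z ω') = (Y ω, Z ω)}) -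
      Real.logb 2 (prb p {ω' | (X ω', Y ω', Z ω') = (X ω, Y ω, Z ω)}) -
      Real.logb 2 (prb p {ω' | Z ω' = Z ω})) ≤
      (p ω * (q (X ω, Y ω, Z ω) / P (X ω, Y ω, Z ω)) - p ω) / Real.log 2 := by
    intro ω
    rcases (hp0 ω).eq_or_lt with h0 | h0
    · simp [← h0]
    have h1 := prb_pos hp0 (show ω ∈ {ω' | (X ω', Z ω') = (X ω, Z ω)} from rfl) h0
    have h2 := prb_pos hp0 (show ω ∈ {ω' | (Y ω', Z ω') = (Y ω, Z ω)} from rfl) h0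
    have h3 := prb_pos hp0
      (show ω ∈ {ω' | (X ω', Y ω', Z ω') = (X ω, Y ω, Z ω)} from rfl) h0
    have h4 := prb_pos hp0 (show ω ∈ {ω' | Z ω' = Z ω} from rfl) h0
    have hqe : q (X ω, Y ω, Z ω) = prb p {ω' | (X ω', Z ω') = (X ω, Z ω)} *
        prb p {ω' | (Y ω', Z ω') = (Y ω, Z ω)} / prb p {ω' | Z ω' = Z ω} := by
      simp [hq]
    have hPe : P (X ω, Y ω, Z ω) =
        prb p {ω' | (X ω', Y ω', Z ω') = (X ω, Y ω, Z ω)} := rfl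
    rw [hqe, hPe]
    generalize prb p {ω' | (X ω', Z ω') = (X ω, Z ω)} = a at *
    generalize prb p {ω' | (Y ω', Z ω') = (Y ω, Z ω)} = b at *
    generalize prb p {ω' | (X ω', Y ω', Z ω') = (X ω, Y ω, Z ω)} = c at *
    generalize prb p {ω' | Z ω' = Z ω} = d at *
    have hl := Real.log_le_sub_one_of_pos (show 0 < a * b / d / c by positivity)
    rw [Real.log_div (by positivity) h3.ne', Real.log_div (by positivity) h4.ne',
      Real.log_mul h1.ne' h2.ne'] at hl
    simp only [Real.logb]
    rw [← add_div, ← sub_div, ← sub_div, ← mul_div_assoc]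
    refine div_le_div_of_nonneg_right ?_ hlog2.le
    nlinarith [mul_le_mul_of_nonneg_left hl h0.le]
  have htot := Finset.sum_le_sum fun ω (_ : ω ∈ Finset.univ) => key ω
  rw [← Finset.sum_div, Finset.sum_sub_distrib, hp1] at htot
  have hle := htot.trans (div_nonpos_of_nonpos_of_nonneg (sub_nonpos.2 hsum) hlog2.le)
  simp only [mul_sub, mul_add, Finset.sum_sub_distrib, Finset.sum_add_distrib] at hle
  rw [ent_eq, ent_eq, ent_eq, ent_eq]
  linarith

lemma shares_eq_iff {Ω : Type} {T : ℕ} {χ : Fin T → Type} (M : ∀ t, Ω → χ t)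
    (S : Finset (Fin T)) (ω ω' : Ω) :
    shares M S ω = shares M S ω' ↔ ∀ t ∈ S, M t ω = M t ω' := by
  simp [shares, funext_iff]

/-- Diminishing returns: the entropy gained by adding share `t` decreases with the set
it is added to. -/
lemma ent_shares_insert_antitone {Ω : Type} [Fintype Ω] {p : Ω → ℝ}
    (hp0 : ∀ ω, 0 ≤ p ω) (hp1 : ∑ ω, p ω = 1) {T : ℕ} {χ : Fin T → Type}
    [∀ t, Fintype (χ t)] (M : ∀ t, Ω → χ t) {A B : Finset (Fin T)} (hAB : A ⊆ B) (t : Fin T) :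
    ent p (shares M (insert t B)) - ent p (shares M B) ≤
      ent p (shares M (insert t A)) - ent p (shares M A) := by
  have h := ent_submod hp0 hp1 (M t) (shares M B) (shares M A)
  rw [ent_congr hp0 (fun ω => (M t ω, shares M B ω, shares M A ω)) (shares M (insert t B)),
    ent_congr hp0 (fun ω => (M t ω, shares M A ω)) (shares M (insert t A)),
    ent_congr hp0 (fun ω => (shares M B ω, shares M A ω)) (shares M B)] at h
  · linarith
  all_goals
    intro ω ω'
    have : (∀ s ∈ B, M s ω = M s ω') → ∀ s ∈ A, M s ω = M s ω' := fun h s hs => h s (hAB hs)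
    simp only [Prod.mk.injEq, shares_eq_iff, Finset.forall_mem_insert]
    try tauto

/-- Adding a share raises the leakage about `F` by at most the entropy it adds. -/
lemma mutInf_insert_le {Ω : Type} [Fintype Ω] {p : Ω → ℝ}
    (hp0 : ∀ ω, 0 ≤ p ω) {T : ℕ} {χ : Fin T → Type}
    [∀ t, Fintype (χ t)] (M : ∀ t, Ω → χ t) {𝔽 : Type} [Fintype 𝔽] (F : Ω → 𝔽)
    (S : Finset (Fin T)) (t : Fin T) :
    mutInf p F (shares M (insert t S)) - mutInf p F (shares M S) ≤
      ent p (shares M (insert t S)) - ent p (shares M S) := by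
  have := ent_mono hp0 (fun ω => (F ω, shares M (insert t S) ω)) (fun ω => (F ω, shares M S ω))
    (by
      intro ω ω'
      simp only [Prod.mk.injEq, shares_eq_iff, Finset.forall_mem_insert]
      tauto)
  simp only [mutInf]
  linarith

lemma ent_shares_empty {Ω : Type} [Fintype Ω] {p : Ω → ℝ} (hp1 : ∑ ω, p ω = 1) {T : ℕ}
    {χ : Fin T → Type} [∀ t, Fintype (χ t)] (M : ∀ t, Ω → χ t) :
    ent p (shares M ∅) = 0 := by
  rw [ent_eq]
  have : ∀ ω, prb p {ω' | shares M ∅ ω' = shares M ∅ ω} = 1 := fun ω => by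
    simp [shares_eq_iff, prb, hp1]
  simp [this]

/-- A share outside a set `A` of at most `τ - L` shares adds entropy at least `H(F) / L`.
Enlarging `A` to sets of sizes `τ - L, …, τ - 1` avoiding `t`, the successive leakage
increments caused by `t` are all at most this gain, and by leakage symmetry they
telescope to `H(F)`. -/
lemma ent_insert_ge {Ω : Type} [Fintype Ω] {p : Ω → ℝ}
    (hp0 : ∀ ω, 0 ≤ p ω) (hp1 : ∑ ω, p ω = 1)
    {T τ L : ℕ} (hτT : τ ≤ T) (hL1 : 1 ≤ L) (hLτ : L < τ)
    {𝔽 : Type} [Fintype 𝔽] (F : Ω → 𝔽)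
    {χ : Fin T → Type} [∀ t, Fintype (χ t)] (M : ∀ t, Ω → χ t)
    (hrec : ∀ S : Finset (Fin T), τ ≤ S.card → condEnt p F (shares M S) = 0)
    (hpriv : ∀ S : Finset (Fin T), S.card ≤ τ - L → mutInf p F (shares M S) = 0)
    (hsym : ∀ t : ℕ, 1 ≤ t → t ≤ T → ∃ C : ℝ, 0 ≤ C ∧
      ∀ S : Finset (Fin T), S.card = t → mutInf p F (shares M S) = C * ent p F)
    {A : Finset (Fin T)} (hA : A.card ≤ τ - L) {t : Fin T} (ht : t ∉ A) :
    ent p F / (L : ℝ) ≤ ent p (shares M (insert t A)) - ent p (shares M A) := by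
  set Δ := ent p (shares M (insert t A)) - ent p (shares M A) with hΔ
  have main : ∀ k : ℕ, k ≤ L → ∀ S : Finset (Fin T), S.card = τ - L + k →
      mutInf p F (shares M S) ≤ k * Δ := by
    intro k
    induction k with
    | zero => intro _ S hS; simp [hpriv S (by omega)]
    | succ k ih =>
      intro hk S hS
      obtain ⟨B, hAB, hBt, hB⟩ := Finset.exists_subsuperset_card_eq
        (s := A) (t := Finset.univ.erase t) (n := τ - L + k)
        (fun a ha => Finset.mem_erase.2 ⟨fun h => ht (h ▸ ha), Finset.mem_univ _⟩)
        (by omega) (by simp; omega)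
      have htB : t ∉ B := fun h => (Finset.mem_erase.1 (hBt h)).1 rfl
      obtain ⟨C, -, hC⟩ := hsym (τ - L + (k + 1)) (by omega) (by omega)
      have e : mutInf p F (shares M S) = mutInf p F (shares M (insert t B)) := by
        rw [hC S hS, hC _ (by rw [Finset.card_insert_of_notMem htB, hB]; omega)]
      have h1 := mutInf_insert_le hp0 M F B t
      have h2 := ent_shares_insert_antitone hp0 hp1 M hAB t
      have h3 := ih (by omega) B hB
      push_cast
      rw [e]
      linarith
  obtain ⟨S, hS⟩ : ∃ S : Finset (Fin T), S.card = τ := by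
    obtain ⟨S, -, hS⟩ := Finset.exists_subset_card_eq
      (s := (Finset.univ : Finset (Fin T))) (n := τ) (by simpa using hτT)
    exact ⟨S, hS⟩
  have h1 := main L le_rfl S (by omega)
  have h2 := hrec S hS.ge
  simp only [condEnt] at h2
  simp only [mutInf] at h1
  have hLpos : (0 : ℝ) < L := by exact_mod_cast hL1
  rw [div_le_iff₀ hLpos]
  linarith

/-- For a `(τ, L, T)` ramp-type scheme (recoverability with threshold
`τ`, perfect privacy against any `τ - L` colluding servers, leakage symmetry), every
individual share satisfies `H(M_t) ≥ H(F) / L`, and the local randomness satisfies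
`ρ = H(R) ≥ ((τ - L) / L) · H(F)`. -/
theorem ramp_secret_sharing_lower_bounds
    {Ω : Type} [Fintype Ω] (p : Ω → ℝ)
    (hp0 : ∀ ω, 0 ≤ p ω) (hp1 : ∑ ω, p ω = 1)
    {T : ℕ} (hT : 2 ≤ T) {τ L : ℕ} (hτ1 : 1 ≤ τ) (hτT : τ ≤ T)
    (hL1 : 1 ≤ L) (hLτ : L < τ)
    {𝔽 : Type} [Fintype 𝔽] (F : Ω → 𝔽) (hF : 0 < ent p F)
    {ℛ : Type} [Fintype ℛ] (R : Ω → ℛ) (ρ : ℝ) (hρ : ent p R = ρ)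
    (hind : ∀ (f : 𝔽) (r : ℛ), prb p {ω | F ω = f ∧ R ω = r} =
      prb p {ω | F ω = f} * prb p {ω | R ω = r})
    {χ : Fin T → Type} [∀ t, Fintype (χ t)] (M : ∀ t, Ω → χ t)
    (hdet : ∀ t : Fin T, ∃ g : 𝔽 → ℛ → χ t, ∀ ω, M t ω = g (F ω) (R ω))
    (hrec : ∀ S : Finset (Fin T), τ ≤ S.card → condEnt p F (shares M S) = 0)
    (hpriv : ∀ S : Finset (Fin T), S.card ≤ τ - L → mutInf p F (shares M S) = 0)
    (hsym : ∀ t : ℕ, 1 ≤ t → t ≤ T → ∃ C : ℝ, 0 ≤ C ∧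
      ∀ S : Finset (Fin T), S.card = t → mutInf p F (shares M S) = C * ent p F) :
    (∀ t : Fin T, ent p (M t) ≥ ent p F / (L : ℝ)) ∧
      ρ ≥ (((τ : ℝ) - (L : ℝ)) / (L : ℝ)) * ent p F := by
  have step : ∀ (A : Finset (Fin T)) (t : Fin T), A.card ≤ τ - L → t ∉ A →
      ent p F / (L : ℝ) ≤ ent p (shares M (insert t A)) - ent p (shares M A) :=
    fun A t hA ht => ent_insert_ge hp0 hp1 hτT hL1 hLτ F M hrec hpriv hsym hA ht
  have hempty := ent_shares_empty hp1 M
  refine ⟨fun t => ?_, ?_⟩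
  · have h := step ∅ t (by simp) (by simp)
    rw [ent_congr hp0 (shares M (insert t ∅)) (M t) (by intro ω ω'; simp [shares_eq_iff])] at h
    linarith
  · have grow : ∀ S : Finset (Fin T), S.card ≤ τ - L →
        (S.card : ℝ) * (ent p F / L) ≤ ent p (shares M S) := by
      intro S
      induction S using Finset.induction_on with
      | empty => intro _; simp [hempty]
      | insert t S ht ih =>
        intro hS
        rw [Finset.card_insert_of_notMem ht] at hS ⊢
        have h1 := ih (by omega)
        have h2 := step S t (by omega) ht
        push_cast
        linarith
    obtain ⟨S, -, hS⟩ := Finset.exists_subset_card_eq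
      (s := (Finset.univ : Finset (Fin T))) (n := τ - L) (by simp; omega)
    have h1 := grow S hS.le
    have h2 := hpriv S hS.le
    have h3 := ent_mono hp0 (fun ω => (F ω, R ω)) (fun ω => (F ω, shares M S ω)) (by
      intro ω ω' h
      obtain ⟨hF', hR'⟩ := Prod.mk.inj h
      refine Prod.ext hF' ((shares_eq_iff M S ω ω').2 fun t _ => ?_)
      obtain ⟨g, hg⟩ := hdet t
      rw [hg, hg, hF', hR'])
    rw [ent_indep hp0 F R hind, hρ] at h3
    simp only [mutInf] at h2
    rw [hS, Nat.cast_sub hLτ.le] at h1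
    have e : ((τ : ℝ) - L) / L * ent p F = ((τ : ℝ) - L) * (ent p F / L) := by ring
    rw [e]
    linarith

end
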